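/- For all positive integers k1, …, kn one has y ш̄ z_{k1} z_{k2} ⋯ z_{kn} = Σ_{i=0}^{n} z_{k1} ⋯ z_{k_i} z_1 z_{k_{i+1}} ⋯ z_{kn} + Σ_{1 ≤ i ≤ n, k_i ≥ 2} Σ_{j=0}^{k_i − 2} z_{k1} ⋯ z_{k_{i−1}} z_{k_i − j} z_{j+1} z_{k_{i+1}} ⋯ z_{kn} − Σ_{i=1}^{n} (k_i + δ_{ni}) z_{k1} ⋯ z_{k_{i−1}} z_{k_i + 1} z_{k_{i+1}} ⋯ z_{kn}, where δ_{ni} = 1 if i = n and 0 otherwise. -/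

import Mathlib

open scoped BigOperators

/-- The two-letter alphabet {x, y}. -/
inductive Letter : Type
  | x : Letter
  | y : Letter
deriving DecidableEq

/-- `H = ℚ⟨x,y⟩`, the noncommutative polynomial ring over ℚ in two
indeterminates, realized as the monoid algebra of the free monoid on `{x,y}`. -/
abbrev H : Type := MonoidAlgebra ℚ (FreeMonoid Letter)

namespace H

/-- The monomial (word) of `H` corresponding to an element of the free monoid. -/
noncomputable def word (w : FreeMonoid Letter) : H := MonoidAlgebra.single w 1

/-- The generator `x`. -/
noncomputable def X : H := word (FreeMonoid.of Letter.x)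

/-- The generator `y`. -/
noncomputable def Y : H := word (FreeMonoid.of Letter.y)

/-- The word `z_k = x^{k-1} y` (for `k ≥ 1`). -/
def zW (k : ℕ) : FreeMonoid Letter :=
  FreeMonoid.ofList (List.replicate (k - 1) Letter.x ++ [Letter.y])

/-- `z_k = x^{k-1} y` as an element of `H`. -/
noncomputable def z (k : ℕ) : H := word (zW k)

/-- A list `[k₁,…,kₙ]` gives the word `z_{k₁} z_{k₂} ⋯ z_{kₙ}`. -/
def zListW (ks : List ℕ) : FreeMonoid Letter :=
  FreeMonoid.ofList (ks.flatMap fun k => List.replicate (k - 1) Letter.x ++ [Letter.y])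

/-- `H¹ = ℚ + Hy` as a ℚ-submodule of `H`. -/
noncomputable def H1 : Submodule ℚ H :=
  LinearMap.range (LinearMap.mulRight ℚ Y) ⊔ Submodule.span ℚ {1}

/-- `H⁰ = ℚ + xHy` as a ℚ-submodule of `H`. -/
noncomputable def H0 : Submodule ℚ H :=
  LinearMap.range ((LinearMap.mulRight ℚ Y).comp (LinearMap.mulLeft ℚ X)) ⊔
    Submodule.span ℚ {1}

/-- Parse a word of `H¹` into the exponent list of its `z`-decomposition:
`z_{k₁}⋯z_{kₙ} ↦ [k₁,…,kₙ]` (auxiliary accumulator version). -/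
def toZAux : List Letter → ℕ → List ℕ
  | [], _ => []
  | Letter.x :: r, n => toZAux r (n + 1)
  | Letter.y :: r, n => (n + 1) :: toZAux r 0

/-- The `z`-decomposition of a word of `H¹`. -/
def toZ (w : FreeMonoid Letter) : List ℕ := toZAux (FreeMonoid.toList w) 0

/-- The harmonic product on words of `H¹` (via `z`-decompositions):
`1 * w = w * 1 = w` and
`z_k w₁ * z_l w₂ = z_k (w₁ * z_l w₂) + z_l (z_k w₁ * w₂) + z_{k+l} (w₁ * w₂)`. -/
noncomputable def harmW : List ℕ → List ℕ → H
  | [], w => word (zListW w)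
  | k :: w1, [] => word (zListW (k :: w1))
  | k :: w1, l :: w2 =>
      z k * harmW w1 (l :: w2) + z l * harmW (k :: w1) w2 + z (k + l) * harmW w1 w2
termination_by w1 w2 => w1.length + w2.length
decreasing_by all_goals simp [Nat.lt_succ_iff] <;> omega

/-- The n-harmonic product on words of `H¹`:
`1 *̄ w = w *̄ 1 = w` and
`z_k w₁ *̄ z_l w₂ = z_k (w₁ *̄ z_l w₂) + z_l (z_k w₁ *̄ w₂) − z_{k+l} (w₁ *̄ w₂)`. -/
noncomputable def nharmW : List ℕ → List ℕ → H
  | [], w => word (zListW w)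
  | k :: w1, [] => word (zListW (k :: w1))
  | k :: w1, l :: w2 =>
      z k * nharmW w1 (l :: w2) + z l * nharmW (k :: w1) w2 - z (k + l) * nharmW w1 w2
termination_by w1 w2 => w1.length + w2.length
decreasing_by all_goals simp [Nat.lt_succ_iff] <;> omega

/-- The harmonic product `*` on `H¹`, extended ℚ-bilinearly. -/
noncomputable def harm (a b : H) : H :=
  Finsupp.sum a.coeff fun w1 c1 =>
    Finsupp.sum b.coeff fun w2 c2 => (c1 * c2) • harmW (toZ w1) (toZ w2)

/-- The n-harmonic product `*̄` on `H¹`, extended ℚ-bilinearly. -/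
noncomputable def nharm (a b : H) : H :=
  Finsupp.sum a.coeff fun w1 c1 =>
    Finsupp.sum b.coeff fun w2 c2 => (c1 * c2) • nharmW (toZ w1) (toZ w2)

/-- The letter exchange `τ(x) = y`, `τ(y) = x`. -/
def τ : Letter → Letter
  | Letter.x => Letter.y
  | Letter.y => Letter.x

/-- `δ(w) = 1` if `w` is the empty word, `0` otherwise. -/
def δ : List Letter → ℚ
  | [] => 1
  | _ :: _ => 0

/-- The shuffle product on words:
`1 ш w = w ш 1 = w` and `u₁w₁ ш u₂w₂ = u₁(w₁ ш u₂w₂) + u₂(u₁w₁ ш w₂)`. -/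
noncomputable def shW : List Letter → List Letter → H
  | [], w => word (FreeMonoid.ofList w)
  | u :: w, [] => word (FreeMonoid.ofList (u :: w))
  | u1 :: w1, u2 :: w2 =>
      word (FreeMonoid.of u1) * shW w1 (u2 :: w2) +
        word (FreeMonoid.of u2) * shW (u1 :: w1) w2
termination_by w1 w2 => w1.length + w2.length
decreasing_by all_goals simp [Nat.lt_succ_iff]

/-- The n-shuffle product on words: `1 ш̄ w = w ш̄ 1 = w` and
`u₁w₁ ш̄ u₂w₂ = u₁(w₁ ш̄ u₂w₂) + u₂(u₁w₁ ш̄ w₂) − δ(w₁)τ(u₁)u₂w₂ − δ(w₂)τ(u₂)u₁w₁`. -/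
noncomputable def nshW : List Letter → List Letter → H
  | [], w => word (FreeMonoid.ofList w)
  | u :: w, [] => word (FreeMonoid.ofList (u :: w))
  | u1 :: w1, u2 :: w2 =>
      word (FreeMonoid.of u1) * nshW w1 (u2 :: w2) +
        word (FreeMonoid.of u2) * nshW (u1 :: w1) w2 -
        δ w1 • word (FreeMonoid.ofList (τ u1 :: u2 :: w2)) -
        δ w2 • word (FreeMonoid.ofList (τ u2 :: u1 :: w1))
termination_by w1 w2 => w1.length + w2.length
decreasing_by all_goals simp [Nat.lt_succ_iff]

/-- The shuffle product `ш` on `H`, extended ℚ-bilinearly. -/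
noncomputable def sh (a b : H) : H :=
  Finsupp.sum a.coeff fun w1 c1 =>
    Finsupp.sum b.coeff fun w2 c2 =>
      (c1 * c2) • shW (FreeMonoid.toList w1) (FreeMonoid.toList w2)

/-- The n-shuffle product `ш̄` on `H`, extended ℚ-bilinearly. -/
noncomputable def nsh (a b : H) : H :=
  Finsupp.sum a.coeff fun w1 c1 =>
    Finsupp.sum b.coeff fun w2 c2 =>
      (c1 * c2) • nshW (FreeMonoid.toList w1) (FreeMonoid.toList w2)

/-- `S₁`: the ℚ-algebra endomorphism of `H` with `S₁(x) = x`, `S₁(y) = x + y`. -/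
noncomputable def S1 : H →ₐ[ℚ] H :=
  MonoidAlgebra.lift ℚ H (FreeMonoid Letter)
    (FreeMonoid.lift fun u => match u with
      | Letter.x => X
      | Letter.y => X + Y)

/-- `S₂`: the ℚ-algebra endomorphism of `H` with `S₂(x) = x`, `S₂(y) = y − x`. -/
noncomputable def S2 : H →ₐ[ℚ] H :=
  MonoidAlgebra.lift ℚ H (FreeMonoid Letter)
    (FreeMonoid.lift fun u => match u with
      | Letter.x => X
      | Letter.y => Y - X)

/-- `S` on a word: `S(1) = 1` and `S(Fy) = S₁(F)y`. -/
noncomputable def SW (w : FreeMonoid Letter) : H :=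
  match (FreeMonoid.toList w).getLast? with
  | some Letter.y =>
      S1 (word (FreeMonoid.ofList (FreeMonoid.toList w).dropLast)) * Y
  | _ => word w

/-- The ℚ-linear map `S : H¹ → H¹` with `S(1) = 1`, `S(Fy) = S₁(F)y`. -/
noncomputable def S (a : H) : H := Finsupp.sum a.coeff fun w c => c • SW w

/-- `S̃` on a word: `S̃(1) = 1` and `S̃(Fy) = S₂(F)y`. -/
noncomputable def StW (w : FreeMonoid Letter) : H :=
  match (FreeMonoid.toList w).getLast? with
  | some Letter.y =>
      S2 (word (FreeMonoid.ofList (FreeMonoid.toList w).dropLast)) * Y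
  | _ => word w

/-- The ℚ-linear map `S̃ : H¹ → H¹` with `S̃(1) = 1`, `S̃(Fy) = S₂(F)y`. -/
noncomputable def St (a : H) : H := Finsupp.sum a.coeff fun w c => c • StW w

/-- The multiple zeta value `ζ(k₁,…,kₙ)`: the sum over strictly decreasing
tuples `m₁ > m₂ > ⋯ > mₙ > 0` of `1/(m₁^{k₁}⋯mₙ^{kₙ})`. -/
noncomputable def mzeta (ks : List ℕ) : ℝ :=
  ∑' m : {f : Fin ks.length → ℕ // (∀ i, 0 < f i) ∧
      ∀ i j : Fin ks.length, i < j → f j < f i},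
    ∏ i : Fin ks.length, ((m.1 i : ℝ) ^ ks.get i)⁻¹

/-- The non-strict multiple zeta value `ζ̄(k₁,…,kₙ)`: the sum over weakly
decreasing tuples `m₁ ≥ m₂ ≥ ⋯ ≥ mₙ > 0` of `1/(m₁^{k₁}⋯mₙ^{kₙ})`. -/
noncomputable def nmzeta (ks : List ℕ) : ℝ :=
  ∑' m : {f : Fin ks.length → ℕ // (∀ i, 0 < f i) ∧
      ∀ i j : Fin ks.length, i ≤ j → f j ≤ f i},
    ∏ i : Fin ks.length, ((m.1 i : ℝ) ^ ks.get i)⁻¹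

/-- The evaluation map `Z : H⁰ → ℝ`, `Z(1) = 1`,
`Z(z_{k₁}⋯z_{kₙ}) = ζ(k₁,…,kₙ)` (extended ℚ-linearly to `H`). -/
noncomputable def Z (a : H) : ℝ := Finsupp.sum a.coeff fun w c => (c : ℝ) * mzeta (toZ w)

/-- The n-evaluation map `Z̄ : H⁰ → ℝ`, `Z̄(1) = 1`,
`Z̄(z_{k₁}⋯z_{kₙ}) = ζ̄(k₁,…,kₙ)` (extended ℚ-linearly to `H`). -/
noncomputable def Zbar (a : H) : ℝ := Finsupp.sum a.coeff fun w c => (c : ℝ) * nmzeta (toZ w)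

/-- `i`-fold n-harmonic power: `a^{*̄ 0} = 1`, `a^{*̄ (i+1)} = a *̄ a^{*̄ i}`. -/
noncomputable def nharmPow : ℕ → H → H
  | 0, _ => 1
  | i + 1, a => nharm a (nharmPow i a)

/-- `i`-fold n-shuffle power: `a^{ш̄ 0} = 1`, `a^{ш̄ (i+1)} = a ш̄ a^{ш̄ i}`. -/
noncomputable def nshPow : ℕ → H → H
  | 0, _ => 1
  | i + 1, a => nsh a (nshPow i a)

end H

open H

/-!
The n-shuffle of a letter `v` with a nonempty word `w u` inserts `v - τ v` before each letter of
`w u`, and corrects this at the right end by `w (u - τ u) v`. Inserting a fixed element before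
each letter is a derivation along the words, so for a word `z_{k₁} ⋯ z_{kₙ}` it suffices to insert
`y` and `x` into the single factors: inserting `y` into `z_k` cuts it into pairs
`z_{k-j} z_{j+1}`, and inserting `x` gives `k` copies of `z_{k+1}`. The right end contributes the
extra summand `z_{k₁} ⋯ z_{kₙ} z_1` and subtracts the `z_{k₁} ⋯ z_{kₙ + 1}` behind `δ_{ni}`.
-/

theorem getD_mem {α : Type*} {l : List α} {i : ℕ} (d : α) (hi : i < l.length) :
    l.getD i d ∈ l := by
  rw [List.getD_eq_getElem _ _ hi]
  exact List.getElem_mem hi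

theorem drop_eq_getD_cons {α : Type*} {l : List α} {i : ℕ} (d : α) (hi : i < l.length) :
    l.drop i = l.getD i d :: l.drop (i + 1) := by
  rw [List.getD_eq_getElem _ _ hi, List.drop_eq_getElem_cons hi]

theorem map_list_prod_of_leibniz {ι M A : Type*} [Monoid M] [Ring A] (φ : M →* A) (D : M → A)
    (leibniz : ∀ a b, D (a * b) = D a * φ b + φ a * D b) (f : ι → M) (d : ι) (l : List ι) :
    D (l.map f).prod =
      ∑ i ∈ Finset.range l.length,
        φ ((l.take i).map f).prod * D (f (l.getD i d)) * φ ((l.drop (i + 1)).map f).prod := by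
  induction l with
  | nil => simpa using leibniz 1 1
  | cons k l ih =>
    rw [List.map_cons, List.prod_cons, leibniz, ih, List.length_cons, Finset.sum_range_succ',
      Finset.mul_sum, add_comm]
    simp [mul_assoc]

namespace H

open FreeMonoid

theorem word_one : word 1 = 1 := rfl

theorem word_mul (v w : FreeMonoid Letter) : word (v * w) = word v * word w :=
  map_mul (MonoidAlgebra.of ℚ (FreeMonoid Letter)) v w

/-- The sum of the products obtained from the word `w` by inserting `a` immediately before one of
its letters. As `a` is not inserted at the right end, this satisfies the Leibniz rule. -/
noncomputable def insertBefore (a : H) (w : FreeMonoid Letter) : H :=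
  ∑ i ∈ Finset.range w.length,
    word (ofList (w.toList.take i)) * a * word (ofList (w.toList.drop i))

theorem insertBefore_one (a : H) : insertBefore a 1 = 0 := rfl

theorem insertBefore_of_mul (a : H) (u : Letter) (w : FreeMonoid Letter) :
    insertBefore a (of u * w) = a * word (of u * w) + word (of u) * insertBefore a w := by
  rw [insertBefore, length_mul, length_of, add_comm 1, Finset.sum_range_succ', insertBefore,
    Finset.mul_sum, add_comm]
  simp [ofList_cons, word_one, word_mul, mul_assoc]

theorem insertBefore_of (a : H) (u : Letter) : insertBefore a (of u) = a * word (of u) := by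
  simpa [insertBefore_one] using insertBefore_of_mul a u 1

theorem insertBefore_mul (a : H) (v w : FreeMonoid Letter) :
    insertBefore a (v * w) = insertBefore a v * word w + word v * insertBefore a w := by
  induction v using FreeMonoid.recOn with
  | one => simp [insertBefore_one, word_one]
  | of_mul u v ih =>
    simp only [mul_assoc, insertBefore_of_mul, ih, word_mul, mul_add, add_mul, add_assoc]

theorem insertBefore_sub (a b : H) (w : FreeMonoid Letter) :
    insertBefore (a - b) w = insertBefore a w - insertBefore b w := by
  simp only [insertBefore, mul_sub, sub_mul, Finset.sum_sub_distrib]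

theorem nsh_word_word (v w : FreeMonoid Letter) :
    nsh (word v) (word w) = nshW v.toList w.toList := by
  simp [nsh, word, MonoidAlgebra.coeff_single]

theorem nsh_of_of (v u : Letter) :
    nsh (word (of v)) (word (of u)) =
      (word (of v) - word (of (τ v))) * word (of u) +
        (word (of u) - word (of (τ u))) * word (of v) := by
  simp only [nsh_word_word, toList_of, nshW, δ, one_smul, ofList_cons, ofList_nil, mul_one,
    word_mul, sub_mul]
  abel

theorem nsh_of_of_mul (v u : Letter) {w : FreeMonoid Letter} (hw : w ≠ 1) :
    nsh (word (of v)) (word (of u * w)) =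
      (word (of v) - word (of (τ v))) * word (of u * w) +
        word (of u) * nsh (word (of v)) (word w) := by
  have hδ : δ w.toList = 0 := by
    cases w using FreeMonoid.casesOn with
    | one => exact absurd rfl hw
    | of_mul u w => rfl
  rw [nsh_word_word, nsh_word_word, toList_of, toList_of_mul, nshW, nshW, hδ]
  simp only [δ, one_smul, zero_smul, sub_zero, ofList_cons, ofList_toList, word_mul, sub_mul]
  abel

theorem nsh_of_mul_of (v u : Letter) (w : FreeMonoid Letter) :
    nsh (word (of v)) (word (w * of u)) =
      insertBefore (word (of v) - word (of (τ v))) (w * of u) +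
        word w * (word (of u) - word (of (τ u))) * word (of v) := by
  induction w using FreeMonoid.recOn with
  | one => rw [one_mul, nsh_of_of, insertBefore_of, word_one, one_mul]
  | of_mul t w ih =>
    have hne : w * of u ≠ 1 := by simp [← length_eq_zero]
    rw [mul_assoc, nsh_of_of_mul v t hne, ih, insertBefore_of_mul, word_mul (of t) w]
    simp only [mul_add, mul_assoc, add_assoc]

theorem ofList_replicate {α : Type*} (n : ℕ) (a : α) : ofList (List.replicate n a) = of a ^ n := by
  induction n with
  | zero => rfl
  | succ n ih => rw [List.replicate_succ, ofList_cons, ih, pow_succ']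

theorem zW_eq_pow_mul (k : ℕ) : zW k = of Letter.x ^ (k - 1) * of Letter.y := by
  rw [zW, ofList_append, ofList_replicate, ofList_singleton]

theorem zW_succ {k : ℕ} (hk : 0 < k) : zW (k + 1) = of Letter.x * zW k := by
  rw [zW_eq_pow_mul, zW_eq_pow_mul, ← mul_assoc, mul_pow_sub_one hk.ne', Nat.add_sub_cancel]

theorem X_mul_z {k : ℕ} (hk : 0 < k) : X * z k = z (k + 1) := by
  rw [X, z, z, zW_succ hk, word_mul]

theorem insertBefore_zW_succ (a : H) {k : ℕ} (hk : 0 < k) :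
    insertBefore a (zW (k + 1)) = a * z (k + 1) + X * insertBefore a (zW k) := by
  rw [z, zW_succ hk, insertBefore_of_mul, X]

theorem insertBefore_X_zW {k : ℕ} (hk : 0 < k) : insertBefore X (zW k) = (k : ℚ) • z (k + 1) := by
  induction k, hk using Nat.le_induction with
  | base =>
    rw [Nat.cast_one, one_smul, ← X_mul_z one_pos]
    exact insertBefore_of X Letter.y
  | succ k hk ih =>
    rw [insertBefore_zW_succ X hk, ih, mul_smul_comm, X_mul_z k.succ_pos, Nat.cast_succ, add_smul,
      one_smul, add_comm]

theorem insertBefore_Y_zW {k : ℕ} (hk : 0 < k) :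
    insertBefore Y (zW k) =
      z 1 * z k + ∑ j ∈ Finset.range (k - 1), z (k - j) * z (j + 1) := by
  induction k, hk using Nat.le_induction with
  | base =>
    rw [Nat.sub_self, Finset.sum_range_zero, add_zero]
    exact insertBefore_of Y Letter.y
  | succ k hk ih =>
    have X_mul_pair : ∀ j ∈ Finset.range (k - 1),
        X * (z (k - j) * z (j + 1)) = z (k + 1 - j) * z (j + 1) := fun j hj => by
      have hj := Finset.mem_range.mp hj
      rw [← mul_assoc, X_mul_z (by omega), Nat.sub_add_comm (by omega)]
    obtain ⟨m, rfl⟩ := Nat.exists_eq_add_one.mpr hk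
    rw [insertBefore_zW_succ Y hk, ih, mul_add, Finset.mul_sum, Finset.sum_congr rfl X_mul_pair,
      ← mul_assoc, X_mul_z one_pos, Nat.add_sub_cancel, Nat.add_sub_cancel, Finset.sum_range_succ,
      add_comm (z _ * z _) (Finset.sum _ _), show m + 1 + 1 - m = 1 + 1 by omega]
    rfl

theorem zListW_eq_prod (ks : List ℕ) : zListW ks = (ks.map zW).prod := by
  simp only [zListW, List.flatMap, ofList_flatten, List.map_map]
  rfl

theorem word_zListW_nil : word (zListW []) = 1 := rfl

theorem word_zListW_append (ks ls : List ℕ) :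
    word (zListW (ks ++ ls)) = word (zListW ks) * word (zListW ls) := by
  simp only [zListW_eq_prod, List.map_append, List.prod_append, word_mul]

theorem word_zListW_cons (k : ℕ) (ks : List ℕ) :
    word (zListW (k :: ks)) = z k * word (zListW ks) := by
  simp only [zListW_eq_prod, List.map_cons, List.prod_cons, word_mul, z]

theorem insertBefore_zListW (a : H) (ks : List ℕ) :
    insertBefore a (zListW ks) =
      ∑ i ∈ Finset.range ks.length,
        word (zListW (ks.take i)) * insertBefore a (zW (ks.getD i 0)) *
          word (zListW (ks.drop (i + 1))) := by
  simp only [zListW_eq_prod]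
  exact map_list_prod_of_leibniz
    (MonoidAlgebra.of ℚ (FreeMonoid Letter)) (insertBefore a) (insertBefore_mul a) zW 0 ks

theorem insertBefore_X_zListW {ks : List ℕ} (hpos : ∀ k ∈ ks, 0 < k) :
    insertBefore X (zListW ks) =
      ∑ i ∈ Finset.range ks.length,
        (ks.getD i 0 : ℚ) • word (zListW (ks.take i ++ [ks.getD i 0 + 1] ++ ks.drop (i + 1))) := by
  rw [insertBefore_zListW]
  refine Finset.sum_congr rfl fun i hi => ?_
  have hki := hpos _ (getD_mem 0 (Finset.mem_range.mp hi))
  simp only [insertBefore_X_zW hki, mul_smul_comm, smul_mul_assoc, word_zListW_append,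
    word_zListW_cons, word_zListW_nil, mul_one]

theorem insertBefore_Y_zListW {ks : List ℕ} (hpos : ∀ k ∈ ks, 0 < k) :
    insertBefore Y (zListW ks) =
      ∑ i ∈ Finset.range ks.length, word (zListW (ks.take i ++ [1] ++ ks.drop i)) +
      ∑ i ∈ Finset.range ks.length, ∑ j ∈ Finset.range (ks.getD i 0 - 1),
        word (zListW (ks.take i ++ [ks.getD i 0 - j, j + 1] ++ ks.drop (i + 1))) := by
  rw [insertBefore_zListW, ← Finset.sum_add_distrib]
  refine Finset.sum_congr rfl fun i hi => ?_
  have hi := Finset.mem_range.mp hi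
  rw [insertBefore_Y_zW (hpos _ (getD_mem 0 hi)), drop_eq_getD_cons 0 hi]
  simp only [word_zListW_append, word_zListW_cons, word_zListW_nil, one_mul, mul_add, add_mul,
    Finset.mul_sum, Finset.sum_mul, mul_assoc]

theorem nsh_Y_zListW_concat (ks : List ℕ) {k : ℕ} (hk : 0 < k) :
    nsh Y (word (zListW (ks ++ [k]))) =
      insertBefore Y (zListW (ks ++ [k])) - insertBefore X (zListW (ks ++ [k])) +
        word (zListW (ks ++ [k] ++ [1])) - word (zListW (ks ++ [k + 1])) := by
  set v := zListW ks * of Letter.x ^ (k - 1) with hv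
  have hsplit : zListW (ks ++ [k]) = v * of Letter.y := by
    simp [hv, zListW_eq_prod, zW_eq_pow_mul, mul_assoc]
  have hY : word v * Y * Y = word (zListW (ks ++ [k] ++ [1])) := by
    rw [word_zListW_append, hsplit, word_mul v]
    rfl
  have hX : word v * X * Y = word (zListW (ks ++ [k + 1])) := by
    rw [X, Y, ← word_mul, ← word_mul, hv, mul_assoc (zListW ks), pow_sub_one_mul hk.ne']
    simp [zListW_eq_prod, zW_eq_pow_mul, mul_assoc]
  have hnsh : nsh Y (word (v * of Letter.y)) =
      insertBefore (Y - X) (v * of Letter.y) + word v * (Y - X) * Y :=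
    nsh_of_mul_of Letter.y Letter.y v
  rw [← hX, ← hY, hsplit, hnsh, insertBefore_sub, mul_sub, sub_mul, add_sub_assoc]

end H

/-- Lemma 3.2 (ii): for positive integers `k₁,…,kₙ`,
`y ш̄ z_{k₁}⋯z_{kₙ}
  = Σ_{i=0}^{n} z_{k₁}⋯z_{kᵢ} z₁ z_{k_{i+1}}⋯z_{kₙ}
  + Σ_{1 ≤ i ≤ n, kᵢ ≥ 2} Σ_{j=0}^{kᵢ−2} z_{k₁}⋯z_{k_{i−1}} z_{kᵢ−j} z_{j+1} z_{k_{i+1}}⋯z_{kₙ}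
  − Σ_{i=1}^{n} (kᵢ + δₙᵢ) z_{k₁}⋯z_{k_{i−1}} z_{kᵢ+1} z_{k_{i+1}}⋯z_{kₙ}`. -/
theorem lemma_3_2_ii (ks : List ℕ) (hne : ks ≠ []) (hpos : ∀ a ∈ ks, 0 < a) :
    nsh Y (word (zListW ks)) =
      (∑ i ∈ Finset.range (ks.length + 1),
        word (zListW (ks.take i ++ [1] ++ ks.drop i))) +
      (∑ i ∈ Finset.range ks.length,
        if 2 ≤ ks.getD i 0 then
          ∑ j ∈ Finset.range (ks.getD i 0 - 1),
            word (zListW (ks.take i ++ [ks.getD i 0 - j, j + 1] ++ ks.drop (i + 1)))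
        else 0) -
      ∑ i ∈ Finset.range ks.length,
        ((ks.getD i 0 : ℚ) + if i = ks.length - 1 then 1 else 0) •
          word (zListW (ks.take i ++ [ks.getD i 0 + 1] ++ ks.drop (i + 1))) := by
  have hcuts (k : ℕ) (f : ℕ → H) :
      (if 2 ≤ k then ∑ j ∈ Finset.range (k - 1), f j else 0) = ∑ j ∈ Finset.range (k - 1), f j :=
    ite_eq_left_iff.mpr fun hk => by rw [show k - 1 = 0 by omega, Finset.sum_range_zero]
  have hlast (f : ℕ → H) :
      ∑ i ∈ Finset.range ks.length, (if i = ks.length - 1 then 1 else 0 : ℚ) • f i =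
        f (ks.length - 1) := by
    simp [ite_smul, List.length_pos_iff.mpr hne]
  obtain ⟨l, k, rfl⟩ : ∃ l k, ks = l ++ [k] := ⟨_, _, (List.dropLast_append_getLast hne).symm⟩
  set ks := l ++ [k] with hks
  have hincr : ks.take (ks.length - 1) ++ [ks.getD (ks.length - 1) 0 + 1] ++
      ks.drop (ks.length - 1 + 1) = l ++ [k + 1] := by
    simp [hks]
  rw [nsh_Y_zListW_concat l (hpos k (by simp [hks])), ← hks, insertBefore_X_zListW hpos,
    insertBefore_Y_zListW hpos, Finset.sum_range_succ, List.take_length, List.drop_length,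
    List.append_nil]
  simp only [hcuts, add_smul, Finset.sum_add_distrib, hlast, hincr]
  abel
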